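/- Let (X,d,μ) be a complete metric measure space with a doubling measure μ, Ω ⊂ X open, and w a weight on Ω satisfying: there exists C > 0 such that ∫_B |f − f_B| w dμ ≤ C w(2B) for every ball B with 11B ⋐ Ω and every f ∈ BMO(Ω) with ‖f‖_{BMO(Ω)} ≤ 1. Then for every η̃ > 0 there exists ε̃ > 0 such that for every ball B with 11B ⋐ Ω and every measurable set F ⊂ B, μ(F) ≤ ε̃ μ(B) implies w(F) ≤ η̃ w(2B). -/

import Mathlib

open MeasureTheory Metric Set
open scoped ENNReal

/-!
Given a set `F` of small measure, cover it by an open set `U` of small measure, let `M` be the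
uncentred maximal function of the indicator of `U`, and count the dyadic levels `2⁻¹, …, 2⁻ᴺ` which
`M` exceeds. This count is a discretised truncation of `N + log₂ M`, so by the argument of Coifman
and Rochberg its mean oscillations are bounded independently of `U` and `N`. It equals `N` on `F`,
whereas the weak type inequality for `M` bounds its mean over the given ball `B` independently of
`N`. Testing the weight against it therefore yields `(N - c) w(F) ≤ c' w(2B)`, with `N` as large as
we like provided `μ(F) / μ(B)` is small enough.
-/

open scoped NNReal

section Average

variable {α E : Type*} [MeasurableSpace α] {ν : Measure α}
  [NormedAddCommGroup E] [NormedSpace ℝ E] [CompleteSpace E] {f : α → E}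

theorem integral_norm_sub_integral_le [IsProbabilityMeasure ν] (hf : Integrable f ν) (a : E) :
    ∫ y, ‖f y - ∫ u, f u ∂ν‖ ∂ν ≤ 2 * ∫ y, ‖f y - a‖ ∂ν := by
  have hfa : Integrable (fun y ↦ f y - a) ν := hf.sub (integrable_const a)
  have mean_sub : ‖(∫ u, f u ∂ν) - a‖ ≤ ∫ y, ‖f y - a‖ ∂ν := by
    simpa [integral_sub hf (integrable_const a)] using
      norm_integral_le_integral_norm (μ := ν) (f · - a)
  calc ∫ y, ‖f y - ∫ u, f u ∂ν‖ ∂ν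
      ≤ ∫ y, (‖f y - a‖ + ‖(∫ u, f u ∂ν) - a‖) ∂ν :=
        integral_mono (hf.sub (integrable_const _)).norm (hfa.norm.add (integrable_const _))
          fun y ↦ by simpa only [norm_sub_rev a] using norm_sub_le_norm_sub_add_norm_sub (f y) a _
    _ = (∫ y, ‖f y - a‖ ∂ν) + ‖(∫ u, f u ∂ν) - a‖ := by
        simp [integral_add hfa.norm (integrable_const _)]
    _ ≤ 2 * ∫ y, ‖f y - a‖ ∂ν := by linarith

theorem average_norm_sub_average_le [IsFiniteMeasure ν] (hf : Integrable f ν) (a : E) :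
    ⨍ y, ‖f y - ⨍ u, f u ∂ν‖ ∂ν ≤ 2 * ⨍ y, ‖f y - a‖ ∂ν := by
  rcases eq_zero_or_neZero ν with rfl | _
  · simp
  · exact integral_norm_sub_integral_le hf.to_average a

end Average

theorem mul_setIntegral_le_setIntegral_mul {α : Type*} [MeasurableSpace α] {ν : Measure α}
    {B F : Set α} {u w : α → ℝ} {c : ℝ} (hB : MeasurableSet B) (hF : MeasurableSet F)
    (hFB : F ⊆ B) (hu : ∀ y ∈ B, 0 ≤ u y) (hw : ∀ y ∈ B, 0 ≤ w y) (hcu : ∀ y ∈ F, c ≤ u y)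
    (hwF : IntegrableOn w F ν) (huw : IntegrableOn (fun y ↦ u y * w y) B ν) :
    c * ∫ y in F, w y ∂ν ≤ ∫ y in B, u y * w y ∂ν :=
  calc c * ∫ y in F, w y ∂ν
      = ∫ y in F, c * w y ∂ν := (integral_const_mul c w).symm
    _ ≤ ∫ y in F, u y * w y ∂ν :=
        setIntegral_mono_on (hwF.const_mul c) (huw.mono_set hFB) hF
          fun y hy ↦ mul_le_mul_of_nonneg_right (hcu y hy) (hw y (hFB hy))
    _ ≤ ∫ y in B, u y * w y ∂ν :=
        setIntegral_mono_set huw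
          (ae_restrict_of_forall_mem hB fun y hy ↦ mul_nonneg (hu y hy) (hw y hy))
          (.of_forall hFB)

theorem ball_subset_ball_four_mul {X : Type*} [PseudoMetricSpace X] {x y z : X} {s R : ℝ}
    (hxy : x ∈ ball y s) (hxz : x ∈ ball z R) (hsR : s ≤ R) : ball y s ⊆ ball z (4 * R) := by
  intro v hv
  have triangle := dist_triangle4 v y x z
  rw [mem_ball] at *
  rw [dist_comm y x] at triangle
  linarith [dist_nonneg (x := x) (y := z)]

section Doubling

variable {X : Type*} [PseudoMetricSpace X] [MeasurableSpace X]

/-- The doubling condition with constant `D`, imposed on open balls of all (positive) radii, for a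
measure which is positive and finite on them. -/
def BallDoubling (μ : Measure X) (D : ℝ≥0) : Prop :=
  ∀ (x : X) (r : ℝ), 0 < r →
    0 < μ (ball x r) ∧ μ (ball x r) < ⊤ ∧ μ (ball x (2 * r)) ≤ D * μ (ball x r)

/-- The superlevel set `{M > t}` of the uncentred Hardy–Littlewood maximal function `M` of the
indicator of `U`: the union of the balls in which `U` has relative measure greater than `t`. -/
def maximalSuperlevel (μ : Measure X) (U : Set X) (t : ℝ≥0∞) : Set X :=
  {x | ∃ (y : X) (s : ℝ), x ∈ ball y s ∧ t * μ (ball y s) < μ (U ∩ ball y s)}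

/-- The number of dyadic levels `2⁻¹, …, 2⁻ᴺ` exceeded by the maximal function of the indicator of
`U`; up to rounding, the positive part of `N + log₂ M`. -/
noncomputable def maximalLevelCount (μ : Measure X) (U : Set X) (N : ℕ) (x : X) : ℝ :=
  ∑ k ∈ Finset.range N, (maximalSuperlevel μ U (2⁻¹ ^ (k + 1))).indicator 1 x

/-- `f` belongs to `BMO(Ω)` with seminorm at most `K`. -/
structure HasBMOBound (f : X → ℝ) (Ω : Set X) (μ : Measure X) (K : ℝ) : Prop where
  locallyIntegrableOn : LocallyIntegrableOn f Ω μ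
  average_le : ∀ (z : X) (R : ℝ), 0 < R → ball z R ⊆ Ω →
    ⨍ y in ball z R, |f y - ⨍ u in ball z R, f u ∂μ| ∂μ ≤ K

variable {μ : Measure X} {D : ℝ≥0} {U Ω : Set X} {t τ : ℝ≥0∞} {x z : X} {r R : ℝ} {N : ℕ}

theorem HasBMOBound.const_mul {f : X → ℝ} {K c : ℝ} (hf : HasBMOBound f Ω μ K) (hc : 0 ≤ c) :
    HasBMOBound (fun y ↦ c * f y) Ω μ (c * K) where
  locallyIntegrableOn := hf.locallyIntegrableOn.smul c
  average_le z R hR hzR := by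
    simp only [setAverage_eq, smul_eq_mul, integral_const_mul, mul_left_comm _ c, ← mul_sub,
      abs_mul, abs_of_nonneg hc]
    simpa only [setAverage_eq, smul_eq_mul] using
      mul_le_mul_of_nonneg_left (hf.average_le z R hR hzR) hc

theorem HasBMOBound.setIntegral_le_of_unit_test {g w : X → ℝ} {K A : ℝ} {B : Set X}
    (hg : HasBMOBound g Ω μ K) (hK : 0 < K)
    (htest : ∀ f, HasBMOBound f Ω μ 1 → ∫ y in B, |f y - ⨍ u in B, f u ∂μ| * w y ∂μ ≤ A) :
    ∫ y in B, |g y - ⨍ u in B, g u ∂μ| * w y ∂μ ≤ K * A := by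
  have unit_bound := hg.const_mul (inv_nonneg.2 hK.le)
  rw [inv_mul_cancel₀ hK.ne'] at unit_bound
  have scaled := htest _ unit_bound
  simp only [setAverage_eq, smul_eq_mul, integral_const_mul, mul_left_comm _ K⁻¹, ← mul_sub,
    abs_mul, abs_of_pos (inv_pos.2 hK), mul_assoc] at scaled
  simpa only [setAverage_eq, smul_eq_mul] using (inv_mul_le_iff₀ hK).1 scaled

namespace BallDoubling

theorem measure_ball_ne_top (hμ : BallDoubling μ D) (x : X) (r : ℝ) : μ (ball x r) ≠ ⊤ := by
  rcases le_or_gt r 0 with hr | hr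
  · simp [ball_eq_empty.2 hr]
  · exact (hμ x r hr).2.1.ne

theorem measureReal_ball_pos (hμ : BallDoubling μ D) (x : X) (hr : 0 < r) :
    0 < μ.real (ball x r) :=
  ENNReal.toReal_pos (hμ x r hr).1.ne' (hμ x r hr).2.1.ne

theorem isFiniteMeasure_restrict_ball (hμ : BallDoubling μ D) (x : X) (r : ℝ) :
    IsFiniteMeasure (μ.restrict (ball x r)) :=
  isFiniteMeasure_restrict.2 (hμ.measure_ball_ne_top x r)

theorem one_le (hμ : BallDoubling μ D) (x : X) : 1 ≤ D := by
  obtain ⟨hpos, hlt_top, hdouble⟩ := hμ x 1 one_pos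
  have : 1 * μ (ball x 1) ≤ D * μ (ball x 1) := by
    rw [one_mul]
    exact (measure_mono (ball_subset_ball (by norm_num))).trans hdouble
  exact_mod_cast (ENNReal.mul_le_mul_iff_left hpos.ne' hlt_top.ne).1 this

theorem measure_ball_four_mul_le (hμ : BallDoubling μ D) (x : X) (r : ℝ) :
    μ (ball x (4 * r)) ≤ D ^ 2 * μ (ball x r) := by
  rcases le_or_gt r 0 with hr | hr
  · simp [ball_eq_empty.2 (by linarith : 4 * r ≤ 0)]
  calc μ (ball x (4 * r))
      = μ (ball x (2 * (2 * r))) := by ring_nf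
    _ ≤ D * μ (ball x (2 * r)) := (hμ x (2 * r) (by positivity)).2.2
    _ ≤ D * (D * μ (ball x r)) := by gcongr; exact (hμ x r hr).2.2
    _ = D ^ 2 * μ (ball x r) := by ring

theorem sigmaFinite (hμ : BallDoubling μ D) : SigmaFinite μ := by
  rcases isEmpty_or_nonempty X with _ | ⟨⟨x⟩⟩
  · rw [Measure.eq_zero_of_isEmpty μ]
    infer_instance
  · exact ⟨⟨{ set := fun n : ℕ ↦ ball x n
              set_mem := fun _ ↦ mem_univ _
              finite := fun n ↦ (hμ.measure_ball_ne_top x n).lt_top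
              spanning := iUnion_ball_nat x }⟩⟩

variable [BorelSpace X]

theorem outerRegular (hμ : BallDoubling μ D) : μ.OuterRegular := by
  rcases isEmpty_or_nonempty X with _ | ⟨⟨x⟩⟩
  · rw [Measure.eq_zero_of_isEmpty μ]
    infer_instance
  · refine Measure.OuterRegular.of_restrict (s := fun n : ℕ ↦ ball x n) (fun n ↦ ?_)
      (fun _ ↦ isOpen_ball) (iUnion_ball_nat x).superset
    have := hμ.isFiniteMeasure_restrict_ball x n
    infer_instance

theorem countable_of_pairwiseDisjoint_ball (hμ : BallDoubling μ D) {ι : Type*} {T : Set ι}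
    {c : ι → X} {ρ : ι → ℝ} (hρ : ∀ i ∈ T, 0 < ρ i)
    (hdisj : T.PairwiseDisjoint fun i ↦ ball (c i) (ρ i)) : T.Countable := by
  have := hμ.sigmaFinite
  have countable_pos := Measure.countable_meas_pos_of_disjoint_iUnion (μ := μ)
    (As := fun i : T ↦ ball (c i) (ρ i)) (fun _ ↦ measurableSet_ball)
    (hdisj.subtype _ _)
  have all_pos : {i : T | 0 < μ (ball (c i) (ρ i))} = univ :=
    eq_univ_of_forall fun i ↦ (hμ _ _ (hρ i i.2)).1
  rw [all_pos] at countable_pos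
  exact countable_coe_iff.1 (countable_univ_iff.1 countable_pos)

theorem mul_measure_biUnion_ball_le (hμ : BallDoubling μ D) (hU : MeasurableSet U) {ι : Type*}
    {T : Set ι} {c : ι → X} {ρ : ι → ℝ} (hρ : ∀ i ∈ T, ρ i ∈ Ioc 0 R)
    (hT : ∀ i ∈ T, t * μ (ball (c i) (ρ i)) ≤ μ (U ∩ ball (c i) (ρ i))) :
    t * μ (⋃ i ∈ T, ball (c i) (ρ i)) ≤ D ^ 2 * μ U := by
  obtain ⟨S, hST, hdisj, hcover⟩ := Vitali.exists_disjoint_subfamily_covering_enlargement_ball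
    T c ρ R (fun i hi ↦ (hρ i hi).2) 4 (by norm_num)
  have hS : S.Countable :=
    hμ.countable_of_pairwiseDisjoint_ball (fun i hi ↦ (hρ i (hST hi)).1) hdisj
  have union_subset : ⋃ i ∈ T, ball (c i) (ρ i) ⊆ ⋃ i ∈ S, ball (c i) (4 * ρ i) := by
    refine iUnion₂_subset fun i hi ↦ ?_
    obtain ⟨j, hj, hij⟩ := hcover i hi
    exact hij.trans (subset_biUnion_of_mem (u := fun j ↦ ball (c j) (4 * ρ j)) hj)
  have ball_le : ∀ i : S, t * μ (ball (c i) (4 * ρ i)) ≤ D ^ 2 * μ (U ∩ ball (c i) (ρ i)) := by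
    intro i
    calc t * μ (ball (c i) (4 * ρ i))
        ≤ t * (D ^ 2 * μ (ball (c i) (ρ i))) := by gcongr; exact hμ.measure_ball_four_mul_le _ _
      _ = D ^ 2 * (t * μ (ball (c i) (ρ i))) := by ring
      _ ≤ D ^ 2 * μ (U ∩ ball (c i) (ρ i)) := by gcongr; exact hT i (hST i.2)
  calc t * μ (⋃ i ∈ T, ball (c i) (ρ i))
      ≤ t * ∑' i : S, μ (ball (c i) (4 * ρ i)) := by
        gcongr
        exact (measure_mono union_subset).trans (measure_biUnion_le μ hS _)
    _ = ∑' i : S, t * μ (ball (c i) (4 * ρ i)) := ENNReal.tsum_mul_left.symm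
    _ ≤ ∑' i : S, D ^ 2 * μ (U ∩ ball (c i) (ρ i)) := ENNReal.tsum_le_tsum ball_le
    _ = D ^ 2 * μ (⋃ i ∈ S, U ∩ ball (c i) (ρ i)) := by
        rw [ENNReal.tsum_mul_left, measure_biUnion hS
          (hdisj.mono fun _ ↦ inter_subset_right) fun _ _ ↦ hU.inter measurableSet_ball]
    _ ≤ D ^ 2 * μ U := by gcongr; exact iUnion₂_subset fun _ _ ↦ inter_subset_left

end BallDoubling

theorem isOpen_maximalSuperlevel (μ : Measure X) (U : Set X) (t : ℝ≥0∞) :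
    IsOpen (maximalSuperlevel μ U t) := by
  refine isOpen_iff_forall_mem_open.2 fun x ⟨y, s, hx, hs⟩ ↦ ?_
  exact ⟨ball y s, fun v hv ↦ ⟨y, s, hv, hs⟩, isOpen_ball, hx⟩

theorem measure_inter_ball_le_of_not_subset_maximalSuperlevel {s : ℝ}
    (hτ : ¬ ball z R ⊆ maximalSuperlevel μ U τ) (hzx : ball z R ⊆ ball x s) :
    μ (U ∩ ball x s) ≤ τ * μ (ball x s) :=
  not_lt.1 fun hlt ↦ hτ fun _ hv ↦ ⟨x, s, hzx hv, hlt⟩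

namespace BallDoubling

theorem subset_maximalSuperlevel (hμ : BallDoubling μ D) (hU : IsOpen U) (ht : t < 1) :
    U ⊆ maximalSuperlevel μ U t := by
  intro x hx
  obtain ⟨s, hs, hsU⟩ := Metric.isOpen_iff.1 hU x hx
  refine ⟨x, s, mem_ball_self hs, ?_⟩
  obtain ⟨hpos, hlt_top, -⟩ := hμ x s hs
  rw [inter_eq_right.2 hsU]
  simpa using (ENNReal.mul_lt_mul_iff_left hpos.ne' hlt_top.ne).2 ht

theorem maximalSuperlevel_inter_ball_subset (hμ : BallDoubling μ D) (hτt : D ^ 2 * τ ≤ t)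
    (hτ : ¬ ball z R ⊆ maximalSuperlevel μ U τ) :
    maximalSuperlevel μ U t ∩ ball z R ⊆ maximalSuperlevel μ (U ∩ ball z (4 * R)) t := by
  rintro x ⟨⟨y, s, hxy, hlt⟩, hxz⟩
  rcases le_total s R with hsR | hRs
  · refine ⟨y, s, hxy, ?_⟩
    rwa [inter_assoc, inter_eq_right.2 (ball_subset_ball_four_mul hxy hxz hsR)]
  · refine absurd hlt (not_lt.2 ?_)
    have hs : 0 < s := pos_of_mem_ball hxy
    calc μ (U ∩ ball y s)
        ≤ μ (U ∩ ball y (4 * s)) := by gcongr; linarith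
      _ ≤ τ * μ (ball y (4 * s)) := measure_inter_ball_le_of_not_subset_maximalSuperlevel hτ
          (ball_subset_ball_four_mul hxz hxy hRs)
      _ ≤ τ * (D ^ 2 * μ (ball y s)) := by gcongr; exact hμ.measure_ball_four_mul_le y s
      _ = D ^ 2 * τ * μ (ball y s) := by ring
      _ ≤ t * μ (ball y s) := by gcongr

variable [BorelSpace X]

theorem mul_measure_maximalSuperlevel_inter_ball_le (hμ : BallDoubling μ D)
    (hU : MeasurableSet U) (t : ℝ≥0∞) (z : X) (R : ℝ) :
    t * μ (maximalSuperlevel μ U t ∩ ball z R) ≤ D ^ 2 * μ U := by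
  by_cases! hlarge : ∃ x y s, x ∈ ball y s ∧ x ∈ ball z R ∧ R ≤ s ∧
      t * μ (ball y s) < μ (U ∩ ball y s)
  · obtain ⟨x, y, s, hxy, hxz, hRs, hlt⟩ := hlarge
    calc t * μ (maximalSuperlevel μ U t ∩ ball z R)
        ≤ t * μ (ball y (4 * s)) := by
          gcongr
          exact inter_subset_right.trans (ball_subset_ball_four_mul hxz hxy hRs)
      _ ≤ t * (D ^ 2 * μ (ball y s)) := by gcongr; exact hμ.measure_ball_four_mul_le y s
      _ = D ^ 2 * (t * μ (ball y s)) := by ring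
      _ ≤ D ^ 2 * μ U := by gcongr; exact hlt.le.trans (measure_mono inter_subset_left)
  · let T : Set (X × ℝ) := {a | a.2 ∈ Ioc 0 R ∧ t * μ (ball a.1 a.2) < μ (U ∩ ball a.1 a.2)}
    have subset_union : maximalSuperlevel μ U t ∩ ball z R ⊆ ⋃ a ∈ T, ball a.1 a.2 := by
      rintro x ⟨⟨y, s, hxy, hlt⟩, hxz⟩
      have hsR : s ≤ R := by
        by_contra! hRs
        exact (hlarge x y s hxy hxz hRs.le).not_gt hlt
      exact mem_biUnion (x := (y, s)) ⟨⟨pos_of_mem_ball hxy, hsR⟩, hlt⟩ hxy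
    calc t * μ (maximalSuperlevel μ U t ∩ ball z R)
        ≤ t * μ (⋃ a ∈ T, ball a.1 a.2) := by gcongr
      _ ≤ D ^ 2 * μ U :=
          hμ.mul_measure_biUnion_ball_le hU (fun _ ha ↦ ha.1) fun _ ha ↦ ha.2.le

theorem not_ball_subset_maximalSuperlevel (hμ : BallDoubling μ D) (hU : MeasurableSet U)
    (hsmall : D ^ 2 * μ U < t * μ (ball z R)) : ¬ ball z R ⊆ maximalSuperlevel μ U t := by
  intro hsub
  have weak_type := hμ.mul_measure_maximalSuperlevel_inter_ball_le hU t z R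
  rw [inter_eq_right.2 hsub] at weak_type
  exact hsmall.not_ge weak_type

theorem mul_measure_maximalSuperlevel_inter_ball_le_of_not_subset (hμ : BallDoubling μ D)
    (hU : MeasurableSet U) (t : ℝ≥0∞) (hτ : ¬ ball z R ⊆ maximalSuperlevel μ U τ) :
    t * μ (maximalSuperlevel μ U t ∩ ball z R) ≤ D ^ 4 * τ * μ (ball z R) := by
  obtain ⟨v, hv, -⟩ := not_subset.1 hτ
  have hR : 0 < R := pos_of_mem_ball hv
  rcases le_total (D ^ 2 * τ) t with hτt | htτ
  · calc t * μ (maximalSuperlevel μ U t ∩ ball z R)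
        ≤ t * μ (maximalSuperlevel μ (U ∩ ball z (4 * R)) t ∩ ball z R) := by
          gcongr t * μ ?_
          exact subset_inter (hμ.maximalSuperlevel_inter_ball_subset hτt hτ) inter_subset_right
      _ ≤ D ^ 2 * μ (U ∩ ball z (4 * R)) :=
          hμ.mul_measure_maximalSuperlevel_inter_ball_le (hU.inter measurableSet_ball) t z R
      _ ≤ D ^ 2 * (τ * μ (ball z (4 * R))) := by
          gcongr
          exact measure_inter_ball_le_of_not_subset_maximalSuperlevel hτ
            (ball_subset_ball (by linarith))
      _ ≤ D ^ 2 * (τ * (D ^ 2 * μ (ball z R))) := by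
          gcongr
          exact hμ.measure_ball_four_mul_le z R
      _ = D ^ 4 * τ * μ (ball z R) := by ring
  · have hD : (1 : ℝ≥0∞) ≤ D := by exact_mod_cast hμ.one_le z
    calc t * μ (maximalSuperlevel μ U t ∩ ball z R)
        ≤ D ^ 2 * τ * μ (ball z R) := by gcongr; exact inter_subset_right
      _ ≤ D ^ 4 * τ * μ (ball z R) := by gcongr; norm_num

theorem sum_measure_maximalSuperlevel_inter_ball_le (hμ : BallDoubling μ D)
    (hU : MeasurableSet U) (hN : ¬ ball z R ⊆ maximalSuperlevel μ U (2⁻¹ ^ N)) :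
    ∑ k ∈ Finset.range N, μ (maximalSuperlevel μ U (2⁻¹ ^ (k + 1)) ∩ ball z R) ≤
      2 * D ^ 4 * μ (ball z R) := by
  have level_le : ∀ k ∈ Finset.range N, μ (maximalSuperlevel μ U (2⁻¹ ^ (k + 1)) ∩ ball z R) ≤
      D ^ 4 * μ (ball z R) * 2⁻¹ ^ (N - 1 - k) := by
    intro k hk
    have hkN : N = (k + 1) + (N - 1 - k) := by have := Finset.mem_range.1 hk; omega
    have level_ne_zero : (2⁻¹ : ℝ≥0∞) ^ (k + 1) ≠ 0 := by simp
    have level_ne_top : (2⁻¹ : ℝ≥0∞) ^ (k + 1) ≠ ⊤ := by simp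
    refine (ENNReal.mul_le_mul_iff_right level_ne_zero level_ne_top).1 ?_
    calc (2⁻¹ : ℝ≥0∞) ^ (k + 1) * μ (maximalSuperlevel μ U (2⁻¹ ^ (k + 1)) ∩ ball z R)
        ≤ D ^ 4 * 2⁻¹ ^ N * μ (ball z R) :=
          hμ.mul_measure_maximalSuperlevel_inter_ball_le_of_not_subset hU _ hN
      _ = D ^ 4 * (2⁻¹ ^ (k + 1) * 2⁻¹ ^ (N - 1 - k)) * μ (ball z R) := by
          rw [← pow_add, ← hkN]
      _ = 2⁻¹ ^ (k + 1) * (D ^ 4 * μ (ball z R) * 2⁻¹ ^ (N - 1 - k)) := by ring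
  calc ∑ k ∈ Finset.range N, μ (maximalSuperlevel μ U (2⁻¹ ^ (k + 1)) ∩ ball z R)
      ≤ ∑ k ∈ Finset.range N, D ^ 4 * μ (ball z R) * 2⁻¹ ^ (N - 1 - k) :=
        Finset.sum_le_sum level_le
    _ = D ^ 4 * μ (ball z R) * ∑ k ∈ Finset.range N, 2⁻¹ ^ k := by
        rw [← Finset.mul_sum, Finset.sum_range_reflect (fun k ↦ (2⁻¹ : ℝ≥0∞) ^ k)]
    _ ≤ D ^ 4 * μ (ball z R) * 2 := by
        gcongr
        exact (ENNReal.sum_le_tsum _).trans_eq ENNReal.tsum_geometric_two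
    _ = 2 * D ^ 4 * μ (ball z R) := by ring

end BallDoubling

theorem maximalLevelCount_mem_Icc (μ : Measure X) (U : Set X) (N : ℕ) (x : X) :
    maximalLevelCount μ U N x ∈ Icc (0 : ℝ) N := by
  refine ⟨Finset.sum_nonneg fun k _ ↦ indicator_nonneg (fun _ _ ↦ zero_le_one) x, ?_⟩
  calc maximalLevelCount μ U N x
      ≤ ∑ _k ∈ Finset.range N, (1 : ℝ) :=
        Finset.sum_le_sum fun k _ ↦ indicator_le_self' (fun _ _ ↦ zero_le_one) x
    _ = N := by simp

theorem maximalLevelCount_succ_of_mem (hx : x ∈ maximalSuperlevel μ U (2⁻¹ ^ (N + 1))) :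
    maximalLevelCount μ U (N + 1) x = maximalLevelCount μ U N x + 1 := by
  simp [maximalLevelCount, Finset.sum_range_succ, indicator_of_mem hx]

theorem BallDoubling.maximalLevelCount_eq_of_mem (hμ : BallDoubling μ D) (hU : IsOpen U) (N : ℕ)
    (hx : x ∈ U) : maximalLevelCount μ U N x = N := by
  induction N with
  | zero => simp [maximalLevelCount]
  | succ N ih =>
    have level_lt_one : (2⁻¹ : ℝ≥0∞) ^ (N + 1) < 1 :=
      pow_lt_one₀ zero_le (ENNReal.inv_lt_one.2 ENNReal.one_lt_two) N.succ_ne_zero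
    rw [maximalLevelCount_succ_of_mem (hμ.subset_maximalSuperlevel hU level_lt_one hx), ih]
    push_cast
    rfl

variable [BorelSpace X]

theorem measurable_maximalLevelCount (μ : Measure X) (U : Set X) (N : ℕ) :
    Measurable (maximalLevelCount μ U N) :=
  Finset.measurable_sum _ fun _ _ ↦
    measurable_one.indicator (isOpen_maximalSuperlevel μ U _).measurableSet

theorem integrableOn_maximalLevelCount {S : Set X} (hS : μ S ≠ ⊤) :
    IntegrableOn (maximalLevelCount μ U N) S μ := by
  refine Measure.integrableOn_of_bounded (M := N) hS
    (measurable_maximalLevelCount μ U N).aestronglyMeasurable (.of_forall fun x ↦ ?_)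
  obtain ⟨hnonneg, hle⟩ := maximalLevelCount_mem_Icc μ U N x
  rwa [Real.norm_of_nonneg hnonneg]

theorem setIntegral_maximalLevelCount {S : Set X} (hS : μ S ≠ ⊤) :
    ∫ y in S, maximalLevelCount μ U N y ∂μ =
      ∑ k ∈ Finset.range N, μ.real (maximalSuperlevel μ U (2⁻¹ ^ (k + 1)) ∩ S) := by
  have := isFiniteMeasure_restrict.2 hS
  have hmeas (k : ℕ) : MeasurableSet (maximalSuperlevel μ U (2⁻¹ ^ (k + 1))) :=
    (isOpen_maximalSuperlevel μ U _).measurableSet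
  simp only [maximalLevelCount]
  rw [integral_finsetSum _ fun k _ ↦ (integrable_const 1).indicator (hmeas k)]
  exact Finset.sum_congr rfl fun k _ ↦ by
    rw [integral_indicator_one (hmeas k), measureReal_restrict_apply (hmeas k)]

namespace BallDoubling

theorem setAverage_maximalLevelCount_le (hμ : BallDoubling μ D) (hU : MeasurableSet U)
    (hN : ¬ ball z R ⊆ maximalSuperlevel μ U (2⁻¹ ^ N)) :
    ⨍ y in ball z R, maximalLevelCount μ U N y ∂μ ≤ 2 * D ^ 4 := by
  obtain ⟨v, hv, -⟩ := not_subset.1 hN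
  have hball := hμ.measure_ball_ne_top z R
  have sum_le := ENNReal.toReal_mono (ENNReal.mul_ne_top (by finiteness) hball)
    (hμ.sum_measure_maximalSuperlevel_inter_ball_le hU hN)
  rw [ENNReal.toReal_sum fun k _ ↦ measure_ne_top_of_subset inter_subset_right hball] at sum_le
  rw [setAverage_eq, smul_eq_mul,
    inv_mul_le_iff₀ (hμ.measureReal_ball_pos z (pos_of_mem_ball hv)),
    setIntegral_maximalLevelCount hball, mul_comm]
  simpa [measureReal_def] using sum_le

theorem exists_setAverage_abs_maximalLevelCount_sub_le (hμ : BallDoubling μ D)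
    (hU : MeasurableSet U) (N : ℕ) (z : X) (R : ℝ) :
    ∃ a : ℝ, ⨍ y in ball z R, |maximalLevelCount μ U N y - a| ∂μ ≤ 2 * D ^ 4 := by
  induction N with
  | zero => exact ⟨0, by simp [maximalLevelCount]⟩
  | succ N ih =>
    by_cases hsub : ball z R ⊆ maximalSuperlevel μ U (2⁻¹ ^ (N + 1))
    · obtain ⟨a, ha⟩ := ih
      refine ⟨a + 1, le_of_eq_of_le ?_ ha⟩
      refine setAverage_congr_fun measurableSet_ball (.of_forall fun y hy ↦ ?_)
      rw [maximalLevelCount_succ_of_mem (hsub hy), add_sub_add_right_eq_sub]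
    · refine ⟨0, ?_⟩
      simpa only [sub_zero, abs_of_nonneg (maximalLevelCount_mem_Icc μ U _ _).1] using
        hμ.setAverage_maximalLevelCount_le hU hsub

theorem hasBMOBound_maximalLevelCount (hμ : BallDoubling μ D) (hU : MeasurableSet U) (N : ℕ)
    (Ω : Set X) : HasBMOBound (maximalLevelCount μ U N) Ω μ (4 * D ^ 4) where
  locallyIntegrableOn y _ := ⟨ball y 1, mem_nhdsWithin_of_mem_nhds (ball_mem_nhds y one_pos),
    integrableOn_maximalLevelCount (hμ.measure_ball_ne_top y 1)⟩
  average_le z R _ _ := by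
    have := hμ.isFiniteMeasure_restrict_ball z R
    obtain ⟨a, ha⟩ := hμ.exists_setAverage_abs_maximalLevelCount_sub_le hU N z R
    have osc_le := average_norm_sub_average_le
      (integrableOn_maximalLevelCount (U := U) (N := N) (hμ.measure_ball_ne_top z R)) a
    simp only [Real.norm_eq_abs] at osc_le
    linarith

theorem exists_hasBMOBound_eq_of_measure_lt (hμ : BallDoubling μ D) {F : Set X}
    (hF : D ^ 2 * μ F < 2⁻¹ ^ N * μ (ball x r)) :
    ∃ g : X → ℝ, Measurable g ∧ (∀ y, g y ∈ Icc (0 : ℝ) N) ∧ (∀ y ∈ F, g y = N) ∧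
      (∀ Ω, HasBMOBound g Ω μ (4 * D ^ 4)) ∧ ⨍ y in ball x r, g y ∂μ ≤ 2 * D ^ 4 := by
  have hD : (D : ℝ≥0∞) ^ 2 ≠ 0 := by
    have := hμ.one_le x
    positivity
  have hFlt : μ F < 2⁻¹ ^ N * μ (ball x r) / D ^ 2 := by
    rwa [ENNReal.lt_div_iff_mul_lt (.inl hD) (.inl (by finiteness)), mul_comm]
  have := hμ.outerRegular
  obtain ⟨U, hFU, hU, hUlt⟩ := F.exists_isOpen_lt_of_lt _ hFlt
  exact ⟨maximalLevelCount μ U N, measurable_maximalLevelCount μ U N,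
    maximalLevelCount_mem_Icc μ U N, fun y hy ↦ hμ.maximalLevelCount_eq_of_mem hU N (hFU hy),
    hμ.hasBMOBound_maximalLevelCount hU.measurableSet N,
    hμ.setAverage_maximalLevelCount_le hU.measurableSet <|
      hμ.not_ball_subset_maximalSuperlevel hU.measurableSet (ENNReal.mul_lt_of_lt_div' hUlt)⟩

theorem sub_mul_setIntegral_le_of_bmo_test (hμ : BallDoubling μ D) {w : X → ℝ} {A : ℝ}
    {F : Set X} (hw : ∀ y ∈ ball x r, 0 ≤ w y) (hwint : IntegrableOn w (ball x r) μ)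
    (htest : ∀ f, HasBMOBound f Ω μ 1 →
      ∫ y in ball x r, |f y - ⨍ u in ball x r, f u ∂μ| * w y ∂μ ≤ A)
    (hFmeas : MeasurableSet F) (hFball : F ⊆ ball x r)
    (hF : D ^ 2 * μ F < 2⁻¹ ^ N * μ (ball x r)) :
    (N - 2 * D ^ 4) * ∫ y in F, w y ∂μ ≤ 4 * D ^ 4 * A := by
  obtain ⟨g, hgmeas, hgIcc, hgF, hgBMO, hgavg⟩ := hμ.exists_hasBMOBound_eq_of_measure_lt hF
  have hD : 1 ≤ D := hμ.one_le x
  set m := ⨍ y in ball x r, g y ∂μ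
  have hint : IntegrableOn (fun y ↦ |g y - m| * w y) (ball x r) μ := by
    refine Integrable.bdd_mul (c := N + |m|) hwint
      (hgmeas.sub_const m).abs.aestronglyMeasurable (.of_forall fun y ↦ ?_)
    rw [Real.norm_eq_abs, abs_abs]
    refine (abs_sub _ _).trans ?_
    rw [abs_of_nonneg (hgIcc y).1]
    gcongr
    exact (hgIcc y).2
  have large_on_F : ∀ y ∈ F, N - 2 * (D : ℝ) ^ 4 ≤ |g y - m| := fun y hy ↦ by
    rw [hgF y hy]
    exact (sub_le_sub_left hgavg _).trans (le_abs_self _)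
  calc (N - 2 * D ^ 4) * ∫ y in F, w y ∂μ
      ≤ ∫ y in ball x r, |g y - m| * w y ∂μ :=
        mul_setIntegral_le_setIntegral_mul measurableSet_ball hFmeas hFball
          (fun _ _ ↦ abs_nonneg _) hw large_on_F (hwint.mono_set hFball) hint
    _ ≤ 4 * D ^ 4 * A := (hgBMO Ω).setIntegral_le_of_unit_test (by positivity) htest

theorem exists_setIntegral_le_of_bmo_test (hμ : BallDoubling μ D) {C η : ℝ} (hC : 0 < C)
    (hη : 0 < η) : ∃ ε : ℝ, 0 < ε ∧ ∀ (Ω : Set X) (w : X → ℝ) (x : X) (r W : ℝ), 0 < r →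
      (∀ y ∈ ball x r, 0 ≤ w y) → IntegrableOn w (ball x r) μ →
      (∀ f, HasBMOBound f Ω μ 1 →
        ∫ y in ball x r, |f y - ⨍ u in ball x r, f u ∂μ| * w y ∂μ ≤ C * W) →
      ∀ F, MeasurableSet F → F ⊆ ball x r → μ F ≤ ENNReal.ofReal ε * μ (ball x r) →
        ∫ y in F, w y ∂μ ≤ η * W := by
  obtain ⟨N, hN⟩ := exists_nat_gt (2 * (D : ℝ) ^ 4 + 4 * D ^ 4 * C / η)
  obtain ⟨ε, hε, hεlt⟩ : ∃ ε : ℝ≥0, 0 < ε ∧ D ^ 2 * ε < 2⁻¹ ^ N := by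
    refine ⟨2⁻¹ ^ N / (D ^ 2 + 1), by positivity, ?_⟩
    rw [mul_div_assoc', div_lt_iff₀ (by positivity), mul_comm]
    gcongr
    exact lt_add_one _
  refine ⟨ε, by exact_mod_cast hε, fun Ω w x r W hr hw hwint htest F hFmeas hFball hF ↦ ?_⟩
  obtain ⟨hpos, hlt_top, -⟩ := hμ x r hr
  have hFsmall : D ^ 2 * μ F < 2⁻¹ ^ N * μ (ball x r) := by
    calc (D : ℝ≥0∞) ^ 2 * μ F
        ≤ D ^ 2 * (ε * μ (ball x r)) := by gcongr; simpa using hF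
      _ = D ^ 2 * ε * μ (ball x r) := by ring
      _ < 2⁻¹ ^ N * μ (ball x r) := by
          refine (ENNReal.mul_lt_mul_iff_left hpos.ne' hlt_top.ne).2 ?_
          have := ENNReal.coe_lt_coe.2 hεlt
          simpa [ENNReal.inv_pow] using this
  have hwF : 0 ≤ ∫ y in F, w y ∂μ := setIntegral_nonneg hFmeas fun y hy ↦ hw y (hFball hy)
  have hD : 0 < (D : ℝ) := by exact_mod_cast one_pos.trans_le (hμ.one_le x)
  have key : 4 * D ^ 4 * C / η * ∫ y in F, w y ∂μ ≤ 4 * D ^ 4 * C / η * (η * W) :=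
    calc 4 * D ^ 4 * C / η * ∫ y in F, w y ∂μ
        ≤ (N - 2 * D ^ 4) * ∫ y in F, w y ∂μ := by gcongr; linarith
      _ ≤ 4 * D ^ 4 * (C * W) :=
          hμ.sub_mul_setIntegral_le_of_bmo_test hw hwint htest hFmeas hFball hFsmall
      _ = 4 * D ^ 4 * C / η * (η * W) := by field_simp
  exact le_of_mul_le_mul_left key (by positivity)

end BallDoubling

end Doubling

theorem bmo_testing_implies_weak_nondoubling_11B_general
    {X : Type*} [PseudoMetricSpace X] [MeasurableSpace X] [BorelSpace X]
    {μ : Measure X} {D : ℝ≥0} (hμ : BallDoubling μ D)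
    {Ω : Set X} {w : X → ℝ} (hw : ∀ x ∈ Ω, 0 ≤ w x) (hwloc : LocallyIntegrableOn w Ω μ)
    {a b : ℝ} (hb : 1 ≤ b) (hba : b ≤ a) {C : ℝ} (hC : 0 < C)
    (htest : ∀ (x : X) (r : ℝ), 0 < r →
      IsCompact (closure (ball x (a * r))) → closure (ball x (a * r)) ⊆ Ω →
      ∀ f : X → ℝ, HasBMOBound f Ω μ 1 →
        ∫ y in ball x r, |f y - ⨍ u in ball x r, f u ∂μ| * w y ∂μ ≤
          C * ∫ y in ball x (b * r), w y ∂μ)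
    (η : ℝ) (hη : 0 < η) :
    ∃ ε : ℝ, 0 < ε ∧ ∀ (x : X) (r : ℝ), 0 < r →
      IsCompact (closure (ball x (a * r))) → closure (ball x (a * r)) ⊆ Ω →
      ∀ F : Set X, MeasurableSet F → F ⊆ ball x r →
        μ F ≤ ENNReal.ofReal ε * μ (ball x r) →
        ∫ y in F, w y ∂μ ≤ η * ∫ y in ball x (b * r), w y ∂μ := by
  obtain ⟨ε, hε, hεF⟩ := hμ.exists_setIntegral_le_of_bmo_test hC hη
  refine ⟨ε, hε, fun x r hr hcompact hΩ ↦ ?_⟩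
  have ball_subset : ball x r ⊆ closure (ball x (a * r)) :=
    (ball_subset_ball (le_mul_of_one_le_left hr.le (hb.trans hba))).trans subset_closure
  exact hεF Ω w x r _ hr (fun y hy ↦ hw y (hΩ (ball_subset hy)))
    ((hwloc.integrableOn_compact_subset hΩ hcompact).mono_set ball_subset)
    (htest x r hr hcompact hΩ)

/-- If `w` satisfies the BMO testing condition `∫_B |f − f_B| w dμ ≤ C w(2B)` for all balls
`B` with `11B ⋐ Ω` and all `f ∈ BMO(Ω)` with `‖f‖_{BMO(Ω)} ≤ 1`, then for every `η̃ > 0`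
there is `ε̃ > 0` such that for every ball `B` with `11B ⋐ Ω` and measurable `F ⊆ B`,
`μ(F) ≤ ε̃ μ(B)` implies `w(F) ≤ η̃ w(2B)`. -/
theorem bmo_testing_implies_weak_nondoubling_11B
    {X : Type*} [MetricSpace X] [CompleteSpace X] [MeasurableSpace X] [BorelSpace X]
    (μ : Measure X) (Cd : ℝ) (hCd : 1 < Cd)
    (hdoub : ∀ (x : X) (r : ℝ), 0 < r →
      0 < μ (ball x r) ∧ μ (ball x r) < ⊤ ∧
      μ (ball x (2 * r)) ≤ ENNReal.ofReal Cd * μ (ball x r))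
    (Ω : Set X) (hΩ : IsOpen Ω) (w : X → ℝ) (hw : ∀ x, 0 ≤ w x)
    (hwloc : LocallyIntegrableOn w Ω μ)
    (C : ℝ) (hC : 0 < C)
    (hBMOtest : ∀ (x : X) (r : ℝ), 0 < r →
      IsCompact (closure (ball x (11 * r))) → closure (ball x (11 * r)) ⊆ Ω →
      ∀ f : X → ℝ, LocallyIntegrableOn f Ω μ →
        (∀ (z : X) (R : ℝ), 0 < R → ball z R ⊆ Ω →
          ⨍ y in ball z R, |f y - ⨍ u in ball z R, f u ∂μ| ∂μ ≤ 1) →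
        ∫ y in ball x r, |f y - ⨍ u in ball x r, f u ∂μ| * w y ∂μ ≤
          C * ∫ y in ball x (2 * r), w y ∂μ) :
    ∀ η : ℝ, 0 < η → ∃ ε : ℝ, 0 < ε ∧
      ∀ (x : X) (r : ℝ), 0 < r →
        IsCompact (closure (ball x (11 * r))) → closure (ball x (11 * r)) ⊆ Ω →
        ∀ F : Set X, MeasurableSet F → F ⊆ ball x r →
          μ F ≤ ENNReal.ofReal ε * μ (ball x r) →
          ∫ y in F, w y ∂μ ≤ η * ∫ y in ball x (2 * r), w y ∂μ := by
  exact bmo_testing_implies_weak_nondoubling_11B_general (D := Cd.toNNReal) hdoub (fun x _ ↦ hw x)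
    hwloc one_le_two (by norm_num) hC fun x r hr hcompact hsub f hf ↦
      hBMOtest x r hr hcompact hsub f hf.locallyIntegrableOn hf.average_le
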